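/- Let μ be the Gauss measure on the irrationals of (0,1) and let a_1, a_2, … be the partial quotient functions of the regular continued fraction expansion. Let 𝒜_k = σ(a_1,…,a_k) and ℬ_j = σ(a_{j+1}, a_{j+2}, …). Then there exists θ ∈ (0,1) such that |μ(A ∩ B) − μ(A)μ(B)| ≤ θ^n μ(A)μ(B) for every k ≥ 1, n ≥ 1, every A ∈ 𝒜_k, and every B ∈ ℬ_{k+n} (Philipp's ψ-mixing estimate). -/

import Mathlib

open Filter MeasureTheory Topology
open scoped Classical

/-- The Gauss map `T x = 1/x mod 1`. -/
noncomputable def gaussMap (x : ℝ) : ℝ := Int.fract x⁻¹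

/-- `cfa n x` is the partial quotient `a_{n+1}(x)` of the regular continued fraction expansion
of `x`, generated by the Gauss map: `a_1(x) = ⌊1/x⌋` and `a_{k+1}(x) = a_k (T x)`. -/
noncomputable def cfa : ℕ → ℝ → ℕ
  | 0, x => ⌊x⁻¹⌋₊
  | n + 1, x => cfa n (gaussMap x)

/-- The Gauss measure `μ(A) = (1/log 2) ∫_A dx/(1+x)` on `(0,1)`. -/
noncomputable def gaussMeasure : Measure ℝ :=
  (volume.restrict (Set.Ioo (0 : ℝ) 1)).withDensity
    fun x => ENNReal.ofReal ((Real.log 2)⁻¹ * (1 + x)⁻¹)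

/-- The σ-algebra `σ(a_1, …, a_k)` generated by the first `k` partial quotients. -/
noncomputable def cfSigmaUpTo (k : ℕ) : MeasurableSpace ℝ :=
  ⨆ i ∈ Finset.range k, MeasurableSpace.comap (cfa i) ⊤

/-- The σ-algebra `σ(a_{j+1}, a_{j+2}, …)` generated by the partial quotients past index `j`. -/
noncomputable def cfSigmaFrom (j : ℕ) : MeasurableSpace ℝ :=
  ⨆ i ∈ {i : ℕ | j ≤ i}, MeasurableSpace.comap (cfa i) ⊤

open Set
open scoped ENNReal NNReal

/-!
The transfer operator `L` of the Gauss map (dual to composition with the Gauss map for the Gauss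
measure `μ`) contracts Lipschitz constants on `[0, 1]`: moving the weights costs `1 / 4` after a
summation by parts, moving the points of evaluation costs `2 / 3`, and `1 / 4 + 2 / 3 = 11 / 12`.
Hence `Lⁿ h` is within `(11 / 12) ^ n * Lip h / (2 log 2)` of the mean of `h`.

Each inverse branch of the Gauss map sends a density `(1 + x) / ((1 + s x) (1 + u x))` with
`s, u ∈ [0, 1]` to a multiple of another one, and `s = 0`, `u = 1` gives the density `1`; so these
densities describe `μ` conditioned on every cylinder. They have Lipschitz constant at most `1` and
mean at least `∫ dμ / (1 + x) = 1 / (2 log 2)`, so the two factors `1 / (2 log 2)` cancel and the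
relative error is `(11 / 12) ^ n` uniformly over cylinders. Summation over cylinders, by induction
on the rank, covers all of `σ(a_1, …, a_k)`.
-/

theorem hasSum_sub_succ_of_antitone {f : ℕ → ℝ} {a : ℝ} (hf : Antitone f)
    (ha : Tendsto f atTop (𝓝 a)) : HasSum (fun i => f i - f (i + 1)) (f 0 - a) := by
  rw [hasSum_iff_tendsto_nat_of_nonneg fun i => sub_nonneg.2 (hf i.le_succ)]
  simpa only [Finset.sum_range_sub'] using ha.const_sub (f 0)

theorem tsum_sub_succ_mul {R : Type*} [Ring R] [TopologicalSpace R] [IsTopologicalAddGroup R]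
    [T2Space R] {d g : ℕ → R} (hdg : Tendsto (fun i => d i * g i) atTop (𝓝 0))
    (hleft : Summable fun i => (d i - d (i + 1)) * g i)
    (hright : Summable fun i => d (i + 1) * (g (i + 1) - g i)) :
    ∑' i, (d i - d (i + 1)) * g i = d 0 * g 0 + ∑' i, d (i + 1) * (g (i + 1) - g i) := by
  rw [← sub_eq_iff_eq_add, ← hleft.tsum_sub hright]
  have hterm (i : ℕ) : (d i - d (i + 1)) * g i - d (i + 1) * (g (i + 1) - g i) =
      d i * g i - d (i + 1) * g (i + 1) := by noncomm_ring
  have hpartial := (hleft.sub hright).hasSum.tendsto_sum_nat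
  simp only [hterm, Finset.sum_range_sub' fun i => d i * g i] at hpartial ⊢
  exact tendsto_nhds_unique hpartial (by simpa using hdg.const_sub (d 0 * g 0))

/-- The `i`-th inverse branch `y ↦ 1 / (i + 1 + y)` of the Gauss map: prepending the partial
quotient `i + 1` to the continued fraction of `y`. -/
noncomputable def gaussBranch (i : ℕ) (y : ℝ) : ℝ := (i + 1 + y)⁻¹

section InverseBranches

variable {i : ℕ} {x y : ℝ}

theorem gaussBranch_pos (hy : 0 ≤ y) : 0 < gaussBranch i y := by
  unfold gaussBranch
  positivity

theorem gaussBranch_anti_left (hy : 0 ≤ y) : Antitone fun i => gaussBranch i y := by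
  intro i j hij
  simp only [gaussBranch]
  gcongr

theorem gaussBranch_mem_Icc (hy : 0 ≤ y) : gaussBranch i y ∈ Icc (0 : ℝ) 1 :=
  ⟨(gaussBranch_pos hy).le, inv_le_one_of_one_le₀ (by linarith [i.cast_nonneg (α := ℝ)])⟩

theorem measurable_gaussBranch (i : ℕ) : Measurable (gaussBranch i) := by
  unfold gaussBranch
  fun_prop

theorem hasDerivAt_gaussBranch (hy : 0 ≤ y) :
    HasDerivAt (gaussBranch i) (-gaussBranch i y ^ 2) y := by
  have hne : (i : ℝ) + 1 + y ≠ 0 := by positivity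
  refine (((hasDerivAt_id y).const_add ((i : ℝ) + 1)).fun_inv hne).congr_deriv ?_
  simp [gaussBranch, neg_div]

theorem continuousOn_gaussBranch (i : ℕ) : ContinuousOn (gaussBranch i) (Icc 0 1) :=
  fun _ hy => (hasDerivAt_gaussBranch hy.1).continuousAt.continuousWithinAt

theorem gaussBranch_sub_gaussBranch (hx : 0 ≤ x) (hy : 0 ≤ y) :
    gaussBranch i x - gaussBranch i y = (y - x) * (gaussBranch i x * gaussBranch i y) := by
  unfold gaussBranch
  field_simp
  ring

theorem tendsto_gaussBranch_atTop (y : ℝ) : Tendsto (fun i => gaussBranch i y) atTop (𝓝 0) :=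
  tendsto_inv_atTop_zero.comp <| tendsto_atTop_add_const_right _ _ <|
    tendsto_atTop_add_const_right _ _ tendsto_natCast_atTop_atTop

theorem hasSum_gaussBranch_sub_succ (hy : 0 ≤ y) :
    HasSum (fun i => gaussBranch i y - gaussBranch (i + 1) y) (gaussBranch 0 y) := by
  simpa only [sub_zero] using
    hasSum_sub_succ_of_antitone (gaussBranch_anti_left hy) (tendsto_gaussBranch_atTop y)

theorem one_add_mul_gaussBranch_zero (hy : 0 ≤ y) : (1 + y) * gaussBranch 0 y = 1 := by
  rw [gaussBranch, Nat.cast_zero, zero_add, mul_inv_cancel₀ (by positivity)]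

theorem gaussMap_gaussBranch (hy : y ∈ Ico (0 : ℝ) 1) : gaussMap (gaussBranch i y) = y := by
  have hcast : (i : ℝ) + 1 + y = ((i + 1 : ℕ) : ℝ) + y := by push_cast; rfl
  rw [gaussMap, gaussBranch, inv_inv, hcast, Int.fract_natCast_add]
  exact Int.fract_eq_self.2 hy

theorem cfa_zero_gaussBranch (hy : y ∈ Ico (0 : ℝ) 1) : cfa 0 (gaussBranch i y) = i + 1 := by
  have hcast : (i : ℝ) + 1 + y = y + ((i + 1 : ℕ) : ℝ) := by push_cast; ring
  rw [cfa, gaussBranch, inv_inv, hcast, Nat.floor_add_natCast hy.1, Nat.floor_eq_zero.2 hy.2,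
    zero_add]

theorem cfa_succ_gaussBranch (n : ℕ) (hy : y ∈ Ico (0 : ℝ) 1) :
    cfa (n + 1) (gaussBranch i y) = cfa n y := by
  rw [cfa, gaussMap_gaussBranch hy]

theorem gaussBranch_cfa_gaussMap (hx : x ∈ Ioc (0 : ℝ) 1) :
    gaussBranch (cfa 0 x - 1) (gaussMap x) = x := by
  have hfloor : 1 ≤ ⌊x⁻¹⌋₊ := Nat.one_le_floor_iff _ |>.2 ((one_le_inv₀ hx.1).2 hx.2)
  rw [gaussBranch, cfa, gaussMap, Nat.cast_sub hfloor, Nat.cast_one, sub_add_cancel,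
    natCast_floor_eq_intCast_floor (inv_nonneg.2 hx.1.le), Int.floor_add_fract, inv_inv]

theorem injOn_gaussBranch (i : ℕ) : InjOn (gaussBranch i) (Ico 0 1) :=
  LeftInvOn.injOn fun _ => gaussMap_gaussBranch

theorem pairwise_disjoint_image_gaussBranch :
    Pairwise (Function.onFun Disjoint fun i => gaussBranch i '' Ico (0 : ℝ) 1) := by
  refine fun i j hij => Set.disjoint_left.2 ?_
  rintro _ ⟨y, hy, rfl⟩ ⟨z, hz, hzy⟩
  have hcfa := congrArg (cfa 0) hzy
  rw [cfa_zero_gaussBranch hz, cfa_zero_gaussBranch hy] at hcfa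
  omega

theorem iUnion_image_gaussBranch : ⋃ i, gaussBranch i '' Ico (0 : ℝ) 1 = Ioc 0 1 := by
  refine Subset.antisymm (iUnion_subset fun i => ?_) fun x hx => mem_iUnion.2 ⟨cfa 0 x - 1, ?_⟩
  · rintro _ ⟨y, hy, rfl⟩
    exact ⟨gaussBranch_pos hy.1, (gaussBranch_mem_Icc hy.1).2⟩
  · exact ⟨gaussMap x, ⟨Int.fract_nonneg _, Int.fract_lt_one _⟩, gaussBranch_cfa_gaussMap hx⟩

end InverseBranches

/-- The conditional probability, under the Gauss measure, that `x` is the image of `gaussMap x = y`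
under the `i`-th inverse branch. -/
noncomputable def gaussWeight (i : ℕ) (y : ℝ) : ℝ :=
  (1 + y) * (gaussBranch i y * gaussBranch (i + 1) y)

/-- The transfer operator of the Gauss map with respect to the Gauss measure
(the Gauss–Kuzmin–Wirsing operator, normalised so that it fixes constants). -/
noncomputable def gaussTransfer (h : ℝ → ℝ) (y : ℝ) : ℝ :=
  ∑' i, gaussWeight i y * h (gaussBranch i y)

section TransferOperator

variable {i : ℕ} {x y : ℝ} {h : ℝ → ℝ} {K : ℝ≥0}

theorem gaussWeight_nonneg (hy : 0 ≤ y) : 0 ≤ gaussWeight i y := by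
  unfold gaussWeight gaussBranch
  positivity

theorem continuousOn_gaussWeight (i : ℕ) : ContinuousOn (gaussWeight i) (Icc 0 1) :=
  (continuousOn_const.add continuousOn_id).mul
    ((continuousOn_gaussBranch i).mul (continuousOn_gaussBranch (i + 1)))

theorem gaussWeight_eq_sub (hy : 0 ≤ y) :
    gaussWeight i y = (1 + y) * gaussBranch i y - (1 + y) * gaussBranch (i + 1) y := by
  unfold gaussWeight gaussBranch
  push_cast
  field_simp
  ring

theorem hasSum_gaussWeight (hy : 0 ≤ y) : HasSum (fun i => gaussWeight i y) 1 := by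
  simpa only [gaussWeight_eq_sub hy, mul_sub, one_add_mul_gaussBranch_zero hy] using
    (hasSum_gaussBranch_sub_succ hy).mul_left (1 + y)

theorem gaussTransfer_const (a : ℝ) (hy : 0 ≤ y) : gaussTransfer (fun _ => a) y = a := by
  rw [gaussTransfer, tsum_mul_right, (hasSum_gaussWeight hy).tsum_eq, one_mul]

theorem gaussTransfer_nonneg (hh : ∀ x ∈ Icc (0 : ℝ) 1, 0 ≤ h x) (hy : 0 ≤ y) :
    0 ≤ gaussTransfer h y :=
  tsum_nonneg fun _ => mul_nonneg (gaussWeight_nonneg hy) (hh _ (gaussBranch_mem_Icc hy))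

theorem summable_gaussWeight_mul (hh : ContinuousOn h (Icc 0 1)) (hx : 0 ≤ x) (hy : 0 ≤ y) :
    Summable fun i => gaussWeight i x * h (gaussBranch i y) := by
  obtain ⟨C, hC⟩ := isCompact_Icc.exists_bound_of_continuousOn hh
  refine Summable.of_norm_bounded ((hasSum_gaussWeight hx).summable.mul_right C) fun i => ?_
  rw [norm_mul, Real.norm_of_nonneg (gaussWeight_nonneg hx)]
  exact mul_le_mul_of_nonneg_left (hC _ (gaussBranch_mem_Icc hy)) (gaussWeight_nonneg hx)

theorem abs_one_add_mul_gaussBranch_sub_le (hx : 0 ≤ x) (hy : 0 ≤ y) :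
    |(1 + x) * gaussBranch i x - (1 + y) * gaussBranch i y| ≤ 1 / 4 * |x - y| := by
  have hfactor : (1 + x) * gaussBranch i x - (1 + y) * gaussBranch i y =
      i / ((i + 1 + x) * (i + 1 + y)) * (x - y) := by
    unfold gaussBranch
    field_simp
    ring
  have hquarter : (i : ℝ) / ((i + 1 + x) * (i + 1 + y)) ≤ 1 / 4 := by
    rw [div_le_div_iff₀ (by positivity) (by norm_num)]
    calc (i : ℝ) * 4 ≤ (i + 1) * (i + 1) := by linarith [sq_nonneg ((i : ℝ) - 1)]
      _ ≤ (i + 1 + x) * (i + 1 + y) := mul_le_mul (le_add_of_nonneg_right hx)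
          (le_add_of_nonneg_right hy) (by positivity) (by positivity)
      _ = 1 * ((i + 1 + x) * (i + 1 + y)) := (one_mul _).symm
  rw [hfactor, abs_mul, abs_of_nonneg (by positivity)]
  gcongr

theorem gaussWeight_mul_gaussBranch_mul_gaussBranch_le (hx : 0 ≤ x) (hy : y ∈ Icc (0 : ℝ) 1) :
    gaussWeight i y * (gaussBranch i x * gaussBranch i y) ≤
      2 / 3 * (gaussBranch i 0 ^ 2 - gaussBranch (i + 1) 0 ^ 2) := by
  have htail : (1 + y) * gaussBranch i y ≤ 2 / (i + 2) := by
    rw [gaussBranch, ← div_eq_mul_inv, div_le_div_iff₀ (by linarith [hy.1, i.cast_nonneg (α := ℝ)])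
      (by positivity)]
    linarith [mul_le_of_le_one_right (i.cast_nonneg (α := ℝ)) hy.2]
  have hle (j : ℕ) {z : ℝ} (hz : 0 ≤ z) : gaussBranch j z ≤ 1 / (j + 1) := by
    rw [gaussBranch, one_div]
    exact inv_anti₀ (by positivity) (le_add_of_nonneg_right hz)
  calc gaussWeight i y * (gaussBranch i x * gaussBranch i y)
      = (1 + y) * gaussBranch i y * gaussBranch (i + 1) y *
          (gaussBranch i x * gaussBranch i y) := by rw [gaussWeight]; ring
    _ ≤ 2 / (i + 2) * (1 / ((i + 1 : ℕ) + 1)) * (1 / (i + 1) * (1 / (i + 1))) := by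
        have hx' := gaussBranch_pos (i := i) hx
        have hy' := gaussBranch_pos (i := i) hy.1
        have hy'' := gaussBranch_pos (i := i + 1) hy.1
        gcongr
        exacts [hle _ hy.1, hle _ hx, hle _ hy.1]
    _ ≤ 2 / 3 * (gaussBranch i 0 ^ 2 - gaussBranch (i + 1) 0 ^ 2) := by
        have hdiff : 2 / 3 * (gaussBranch i 0 ^ 2 - gaussBranch (i + 1) 0 ^ 2) -
            2 / (i + 2) * (1 / ((i + 1 : ℕ) + 1)) * (1 / (i + 1) * (1 / (i + 1))) =
              4 / 3 * i / ((i + 1) * (i + 2)) ^ 2 := by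
          unfold gaussBranch
          push_cast
          field_simp
          ring
        rw [← sub_nonneg, hdiff]
        positivity

theorem hasSum_gaussBranch_zero_sq_sub_succ :
    HasSum (fun i => gaussBranch i 0 ^ 2 - gaussBranch (i + 1) 0 ^ 2) 1 := by
  have hanti : Antitone fun i => gaussBranch i 0 ^ 2 := fun i j hij =>
    pow_le_pow_left₀ (gaussBranch_pos le_rfl).le (gaussBranch_anti_left le_rfl hij) 2
  simpa [gaussBranch] using
    hasSum_sub_succ_of_antitone hanti ((tendsto_gaussBranch_atTop 0).pow 2)

theorem abs_apply_gaussBranch_sub_succ_le (hh : LipschitzOnWith K h (Icc 0 1)) (hx : 0 ≤ x) :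
    |h (gaussBranch (i + 1) x) - h (gaussBranch i x)| ≤
      K * (gaussBranch i x - gaussBranch (i + 1) x) := by
  have hmono : gaussBranch (i + 1) x ≤ gaussBranch i x := gaussBranch_anti_left hx i.le_succ
  rw [← abs_of_nonneg (sub_nonneg.2 hmono), abs_sub_comm (gaussBranch i x)]
  exact hh.dist_le_mul _ (gaussBranch_mem_Icc hx) _ (gaussBranch_mem_Icc hx)

theorem abs_tsum_gaussWeight_sub_mul_le (hh : LipschitzOnWith K h (Icc 0 1))
    (hx : 0 ≤ x) (hy : 0 ≤ y) :
    |∑' i, (gaussWeight i x - gaussWeight i y) * h (gaussBranch i x)| ≤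
      1 / 4 * K * |x - y| := by
  -- Only `h` at consecutive points `gaussBranch i x` matters after summation by parts, and those
  -- points are monotone in `i`, so that the Lipschitz bounds telescope.
  set d : ℕ → ℝ := fun i => (1 + x) * gaussBranch i x - (1 + y) * gaussBranch i y with hd
  set g : ℕ → ℝ := fun i => h (gaussBranch i x)
  have hweight (i : ℕ) : gaussWeight i x - gaussWeight i y = d i - d (i + 1) := by
    rw [gaussWeight_eq_sub hx, gaussWeight_eq_sub hy, hd]
    ring
  have hd0 : d 0 = 0 := by
    simp [hd, one_add_mul_gaussBranch_zero hx, one_add_mul_gaussBranch_zero hy]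
  have hdlim : Tendsto d atTop (𝓝 0) := by
    simpa using ((tendsto_gaussBranch_atTop x).const_mul (1 + x)).sub
      ((tendsto_gaussBranch_atTop y).const_mul (1 + y))
  have hterm (i : ℕ) : ‖d (i + 1) * (g (i + 1) - g i)‖ ≤
      1 / 4 * |x - y| * (K * (gaussBranch i x - gaussBranch (i + 1) x)) := by
    rw [norm_mul]
    exact mul_le_mul (abs_one_add_mul_gaussBranch_sub_le hx hy)
      (abs_apply_gaussBranch_sub_succ_le hh hx) (norm_nonneg _) (by positivity)
  have hbound := ((hasSum_gaussBranch_sub_succ hx).mul_left (K : ℝ)).mul_left (1 / 4 * |x - y|)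
  have hdg : Tendsto (fun i => d i * g i) atTop (𝓝 0) := by
    obtain ⟨C, hC⟩ := isCompact_Icc.exists_bound_of_continuousOn hh.continuousOn
    exact hdlim.zero_mul_isBoundedUnder_le <|
      isBoundedUnder_of ⟨C, fun i => hC _ (gaussBranch_mem_Icc hx)⟩
  have hleft : Summable fun i => (d i - d (i + 1)) * g i := by
    simp only [← hweight, sub_mul]
    exact (summable_gaussWeight_mul hh.continuousOn hx hx).sub
      (summable_gaussWeight_mul hh.continuousOn hy hx)
  simp only [hweight]
  rw [tsum_sub_succ_mul hdg hleft (.of_norm_bounded hbound.summable hterm), hd0, zero_mul,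
    zero_add]
  calc |∑' i, d (i + 1) * (g (i + 1) - g i)|
      ≤ 1 / 4 * |x - y| * (K * gaussBranch 0 x) := tsum_of_norm_bounded hbound hterm
    _ ≤ 1 / 4 * |x - y| * (K * 1) := by gcongr; exact (gaussBranch_mem_Icc hx).2
    _ = 1 / 4 * K * |x - y| := by ring

theorem abs_tsum_gaussWeight_mul_sub_le (hh : LipschitzOnWith K h (Icc 0 1))
    (hx : 0 ≤ x) (hy : y ∈ Icc (0 : ℝ) 1) :
    |∑' i, gaussWeight i y * (h (gaussBranch i x) - h (gaussBranch i y))| ≤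
      2 / 3 * K * |x - y| := by
  have hbound := hasSum_gaussBranch_zero_sq_sub_succ.mul_left (K * |x - y| * (2 / 3))
  have hterm (i : ℕ) : ‖gaussWeight i y * (h (gaussBranch i x) - h (gaussBranch i y))‖ ≤
      K * |x - y| * (2 / 3) * (gaussBranch i 0 ^ 2 - gaussBranch (i + 1) 0 ^ 2) := by
    have hpos := mul_pos (gaussBranch_pos (i := i) hx) (gaussBranch_pos (i := i) hy.1)
    calc ‖gaussWeight i y * (h (gaussBranch i x) - h (gaussBranch i y))‖
        = gaussWeight i y * ‖h (gaussBranch i x) - h (gaussBranch i y)‖ := by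
          rw [norm_mul, Real.norm_of_nonneg (gaussWeight_nonneg hy.1)]
      _ ≤ gaussWeight i y * (K * ‖gaussBranch i x - gaussBranch i y‖) := by
          gcongr
          · exact gaussWeight_nonneg hy.1
          · exact hh.norm_sub_le (gaussBranch_mem_Icc hx) (gaussBranch_mem_Icc hy.1)
      _ = K * |x - y| * (gaussWeight i y * (gaussBranch i x * gaussBranch i y)) := by
          rw [gaussBranch_sub_gaussBranch hx hy.1, norm_mul, Real.norm_of_nonneg hpos.le,
            Real.norm_eq_abs, abs_sub_comm]
          ring
      _ ≤ K * |x - y| * (2 / 3) * (gaussBranch i 0 ^ 2 - gaussBranch (i + 1) 0 ^ 2) := by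
          rw [mul_assoc _ (2 / 3 : ℝ)]
          exact mul_le_mul_of_nonneg_left
            (gaussWeight_mul_gaussBranch_mul_gaussBranch_le hx hy) (by positivity)
  refine (tsum_of_norm_bounded hbound hterm).trans_eq ?_
  ring

theorem lipschitzOnWith_gaussTransfer (hh : LipschitzOnWith K h (Icc 0 1)) :
    LipschitzOnWith (11 / 12 * K) (gaussTransfer h) (Icc 0 1) := by
  refine LipschitzOnWith.of_dist_le_mul fun x hx y hy => ?_
  have hxx := summable_gaussWeight_mul hh.continuousOn hx.1 hx.1
  have hyx := summable_gaussWeight_mul hh.continuousOn hy.1 hx.1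
  have hyy := summable_gaussWeight_mul hh.continuousOn hy.1 hy.1
  have hsplit : gaussTransfer h x - gaussTransfer h y =
      ∑' i, (gaussWeight i x - gaussWeight i y) * h (gaussBranch i x) +
        ∑' i, gaussWeight i y * (h (gaussBranch i x) - h (gaussBranch i y)) := by
    simp only [sub_mul, mul_sub]
    rw [hxx.tsum_sub hyx, hyx.tsum_sub hyy, sub_add_sub_cancel, gaussTransfer, gaussTransfer]
  rw [Real.dist_eq, Real.dist_eq, hsplit]
  refine (abs_add_le _ _).trans <| (add_le_add (abs_tsum_gaussWeight_sub_mul_le hh hx.1 hy.1)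
    (abs_tsum_gaussWeight_mul_sub_le hh hx.1 hy)).trans_eq ?_
  push_cast
  ring

end TransferOperator

section GaussMeasure

theorem lintegral_Ioo_eq_tsum_gaussBranch (F : ℝ → ℝ≥0∞) :
    ∫⁻ x in Ioo (0 : ℝ) 1, F x =
      ∑' i, ∫⁻ y in Ioo (0 : ℝ) 1, ENNReal.ofReal (gaussBranch i y ^ 2) * F (gaussBranch i y) := by
  have hmeas (i : ℕ) : MeasurableSet (gaussBranch i '' Ico (0 : ℝ) 1) :=
    measurableSet_Ico.image_of_measurable_injOn (measurable_gaussBranch i) (injOn_gaussBranch i)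
  rw [setLIntegral_congr Ioo_ae_eq_Ioc, ← iUnion_image_gaussBranch,
    lintegral_iUnion hmeas pairwise_disjoint_image_gaussBranch]
  refine tsum_congr fun i => ?_
  rw [lintegral_image_eq_lintegral_abs_deriv_mul measurableSet_Ico
    (fun y hy => (hasDerivAt_gaussBranch hy.1).hasDerivWithinAt) (injOn_gaussBranch i),
    setLIntegral_congr Ioo_ae_eq_Ico]
  simp only [abs_neg, abs_sq]

theorem lintegral_gaussMeasure (F : ℝ → ℝ≥0∞) :
    ∫⁻ x, F x ∂gaussMeasure =
      ∫⁻ x in Ioo (0 : ℝ) 1, ENNReal.ofReal ((Real.log 2)⁻¹ * (1 + x)⁻¹) * F x := by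
  rw [gaussMeasure, lintegral_withDensity_eq_lintegral_mul_non_measurable _ (by fun_prop)
    (ae_of_all _ fun _ => ENNReal.ofReal_lt_top)]
  rfl

theorem integral_gaussMeasure (f : ℝ → ℝ) :
    ∫ x, f x ∂gaussMeasure = (Real.log 2)⁻¹ * ∫ x in (0 : ℝ)..1, f x / (1 + x) := by
  rw [gaussMeasure, integral_withDensity_eq_integral_toReal_smul (by fun_prop)
    (ae_of_all _ fun _ => ENNReal.ofReal_lt_top), intervalIntegral.integral_of_le zero_le_one,
    integral_Ioc_eq_integral_Ioo, ← integral_const_mul]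
  refine setIntegral_congr_fun measurableSet_Ioo fun x hx => ?_
  have hpos : 0 < 1 + x := by linarith [hx.1]
  rw [ENNReal.toReal_ofReal (by positivity), smul_eq_mul, div_eq_mul_inv]
  ring

instance isProbabilityMeasure_gaussMeasure : IsProbabilityMeasure gaussMeasure := by
  have hint : ∫ x in (0 : ℝ)..1, (1 : ℝ) / (1 + x) = Real.log 2 := by
    rw [intervalIntegral.integral_comp_add_left (fun x : ℝ => 1 / x),
      integral_one_div_of_pos (by norm_num) (by norm_num)]
    norm_num
  have hone : ∫ _, (1 : ℝ) ∂gaussMeasure = 1 := by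
    rw [integral_gaussMeasure, hint, inv_mul_cancel₀ (Real.log_pos one_lt_two).ne']
  rw [integral_const, smul_eq_mul, mul_one] at hone
  exact ⟨(ENNReal.toReal_eq_one_iff _).1 hone⟩

theorem ae_gaussMeasure_mem_Ioo : ∀ᵐ x ∂gaussMeasure, x ∈ Ioo (0 : ℝ) 1 :=
  (withDensity_absolutelyContinuous _ _).ae_le (ae_restrict_mem measurableSet_Ioo)

theorem integrable_gaussMeasure {f : ℝ → ℝ} (hf : ContinuousOn f (Icc 0 1)) :
    Integrable f gaussMeasure := by
  rw [← Measure.restrict_eq_self_of_ae_mem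
    (ae_gaussMeasure_mem_Ioo.mono fun _ hx => Ioo_subset_Icc_self hx)]
  exact hf.integrableOn_Icc

theorem lintegral_gaussMeasure_eq_tsum_gaussBranch (F : ℝ → ℝ≥0∞) :
    ∫⁻ x, F x ∂gaussMeasure = ∑' i, ∫⁻ y, ENNReal.ofReal (gaussWeight i y) * F (gaussBranch i y)
      ∂gaussMeasure := by
  rw [lintegral_gaussMeasure, lintegral_Ioo_eq_tsum_gaussBranch]
  refine tsum_congr fun i => ?_
  rw [lintegral_gaussMeasure]
  refine setLIntegral_congr_fun measurableSet_Ioo fun y hy => ?_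
  have hy0 : 0 < y := hy.1
  have hbranch := gaussBranch_pos (i := i) hy0.le
  rw [← mul_assoc, ← mul_assoc, ← ENNReal.ofReal_mul (by positivity),
    ← ENNReal.ofReal_mul (by positivity)]
  congr 2
  unfold gaussWeight gaussBranch
  push_cast
  field_simp
  ring

theorem setLIntegral_gaussMeasure_eq_tsum_gaussBranch (F : ℝ → ℝ≥0∞) {E : Set ℝ}
    (hE : MeasurableSet E) :
    ∫⁻ x in E, F x ∂gaussMeasure = ∑' i, ∫⁻ y in gaussBranch i ⁻¹' E,
      ENNReal.ofReal (gaussWeight i y) * F (gaussBranch i y) ∂gaussMeasure := by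
  rw [← lintegral_indicator hE, lintegral_gaussMeasure_eq_tsum_gaussBranch]
  refine tsum_congr fun i => ?_
  rw [← lintegral_indicator (measurable_gaussBranch i hE)]
  congr 1 with y
  by_cases hy : gaussBranch i y ∈ E <;> simp [hy]

theorem measurable_gaussMap : Measurable gaussMap :=
  measurable_fract.comp measurable_inv

theorem gaussBranch_preimage_gaussMap_preimage_ae_eq (i : ℕ) (E : Set ℝ) :
    gaussBranch i ⁻¹' (gaussMap ⁻¹' E) =ᵐ[gaussMeasure] E := by
  filter_upwards [ae_gaussMeasure_mem_Ioo] with y hy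
  exact congrArg E (gaussMap_gaussBranch (Ioo_subset_Ico_self hy))

end GaussMeasure

section Duality

variable {h : ℝ → ℝ} {K : ℝ≥0} {E : Set ℝ}

theorem setLIntegral_preimage_gaussMap (hcont : ContinuousOn h (Icc 0 1))
    (hnonneg : ∀ x ∈ Icc (0 : ℝ) 1, 0 ≤ h x) (hE : MeasurableSet E) :
    ∫⁻ x in gaussMap ⁻¹' E, ENNReal.ofReal (h x) ∂gaussMeasure =
      ∫⁻ y in E, ENNReal.ofReal (gaussTransfer h y) ∂gaussMeasure := by
  set w : ℕ → ℝ → ℝ := fun i y => gaussWeight i y * h (gaussBranch i y)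
  have hmeas (i : ℕ) :
      AEMeasurable (fun y => ENNReal.ofReal (w i y)) (gaussMeasure.restrict E) := by
    refine (integrable_gaussMeasure ?_).aemeasurable.ennreal_ofReal.restrict
    exact (continuousOn_gaussWeight i).mul <|
      hcont.comp (continuousOn_gaussBranch i) fun y hy => gaussBranch_mem_Icc hy.1
  have htsum : ∀ᵐ y ∂gaussMeasure, ENNReal.ofReal (gaussTransfer h y) =
      ∑' i, ENNReal.ofReal (w i y) := by
    filter_upwards [ae_gaussMeasure_mem_Ioo] with y hy
    exact ENNReal.ofReal_tsum_of_nonneg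
      (fun i => mul_nonneg (gaussWeight_nonneg hy.1.le) (hnonneg _ (gaussBranch_mem_Icc hy.1.le)))
      (summable_gaussWeight_mul hcont hy.1.le hy.1.le)
  rw [setLIntegral_gaussMeasure_eq_tsum_gaussBranch _ (measurable_gaussMap hE),
    lintegral_congr_ae (ae_restrict_of_ae htsum), lintegral_tsum hmeas]
  refine tsum_congr fun i => ?_
  rw [setLIntegral_congr (gaussBranch_preimage_gaussMap_preimage_ae_eq i E)]
  refine lintegral_congr_ae (ae_restrict_of_ae ?_)
  filter_upwards [ae_gaussMeasure_mem_Ioo] with y hy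
  rw [ENNReal.ofReal_mul (gaussWeight_nonneg hy.1.le)]

theorem measurePreserving_gaussMap : MeasurePreserving gaussMap gaussMeasure gaussMeasure := by
  refine ⟨measurable_gaussMap, Measure.ext fun E hE => ?_⟩
  have hdual := setLIntegral_preimage_gaussMap (h := fun _ => 1) continuousOn_const
    (fun _ _ => zero_le_one) hE
  have hfix : ∀ᵐ y ∂gaussMeasure, ENNReal.ofReal (gaussTransfer (fun _ => 1) y) = 1 := by
    filter_upwards [ae_gaussMeasure_mem_Ioo] with y hy
    rw [gaussTransfer_const 1 hy.1.le, ENNReal.ofReal_one]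
  rw [lintegral_congr_ae (ae_restrict_of_ae hfix)] at hdual
  rwa [ENNReal.ofReal_one, setLIntegral_one, setLIntegral_one,
    ← Measure.map_apply measurable_gaussMap hE] at hdual

theorem lipschitzOnWith_gaussTransfer_iterate (hh : LipschitzOnWith K h (Icc 0 1)) (n : ℕ) :
    LipschitzOnWith ((11 / 12) ^ n * K) (gaussTransfer^[n] h) (Icc 0 1) := by
  induction n with
  | zero => simpa using hh
  | succ n ih =>
    rw [Function.iterate_succ_apply', pow_succ', mul_assoc]
    exact lipschitzOnWith_gaussTransfer ih

theorem gaussTransfer_iterate_nonneg (hnonneg : ∀ x ∈ Icc (0 : ℝ) 1, 0 ≤ h x) (n : ℕ) :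
    ∀ x ∈ Icc (0 : ℝ) 1, 0 ≤ gaussTransfer^[n] h x := by
  induction n with
  | zero => exact hnonneg
  | succ n ih =>
    rw [Function.iterate_succ_apply']
    exact fun x hx => gaussTransfer_nonneg ih hx.1

theorem setLIntegral_preimage_gaussMap_iterate (hh : LipschitzOnWith K h (Icc 0 1))
    (hnonneg : ∀ x ∈ Icc (0 : ℝ) 1, 0 ≤ h x) (n : ℕ) (hE : MeasurableSet E) :
    ∫⁻ x in gaussMap^[n] ⁻¹' E, ENNReal.ofReal (h x) ∂gaussMeasure =
      ∫⁻ y in E, ENNReal.ofReal (gaussTransfer^[n] h y) ∂gaussMeasure := by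
  induction n generalizing E with
  | zero => rfl
  | succ n ih =>
    rw [Function.iterate_succ', preimage_comp, ih (measurable_gaussMap hE),
      setLIntegral_preimage_gaussMap (lipschitzOnWith_gaussTransfer_iterate hh n).continuousOn
        (gaussTransfer_iterate_nonneg hnonneg n) hE, Function.iterate_succ_apply']

theorem lintegral_ofReal_gaussMeasure (hcont : ContinuousOn h (Icc 0 1))
    (hnonneg : ∀ x ∈ Icc (0 : ℝ) 1, 0 ≤ h x) :
    ∫⁻ x, ENNReal.ofReal (h x) ∂gaussMeasure = ENNReal.ofReal (∫ x, h x ∂gaussMeasure) :=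
  (ofReal_integral_eq_lintegral_ofReal (integrable_gaussMeasure hcont) <|
    ae_gaussMeasure_mem_Ioo.mono fun x hx => hnonneg x (Ioo_subset_Icc_self hx)).symm

theorem integral_gaussTransfer_iterate (hh : LipschitzOnWith K h (Icc 0 1))
    (hnonneg : ∀ x ∈ Icc (0 : ℝ) 1, 0 ≤ h x) (n : ℕ) :
    ∫ x, gaussTransfer^[n] h x ∂gaussMeasure = ∫ x, h x ∂gaussMeasure := by
  have hdual := setLIntegral_preimage_gaussMap_iterate hh hnonneg n MeasurableSet.univ
  rw [preimage_univ, setLIntegral_univ, setLIntegral_univ,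
    lintegral_ofReal_gaussMeasure hh.continuousOn hnonneg,
    lintegral_ofReal_gaussMeasure (lipschitzOnWith_gaussTransfer_iterate hh n).continuousOn
      (gaussTransfer_iterate_nonneg hnonneg n)] at hdual
  have hmean {g : ℝ → ℝ} (hg : ∀ x ∈ Icc (0 : ℝ) 1, 0 ≤ g x) : 0 ≤ ∫ x, g x ∂gaussMeasure :=
    integral_nonneg_of_ae <|
      ae_gaussMeasure_mem_Ioo.mono fun x hx => hg x (Ioo_subset_Icc_self hx)
  exact ((ENNReal.ofReal_eq_ofReal_iff (hmean hnonneg)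
    (hmean (gaussTransfer_iterate_nonneg hnonneg n))).1 hdual).symm

theorem integral_abs_sub_gaussMeasure_le {x : ℝ} (hx : x ∈ Icc (0 : ℝ) 1) :
    ∫ y, |x - y| ∂gaussMeasure ≤ 1 / (2 * Real.log 2) := by
  -- The convex function `|x - y|` of `y` lies below its chord over `[0, 1]`, of mean `1 / 2`.
  have hchord (y : ℝ) (hy : y ∈ Icc (0 : ℝ) 1) : |x - y| / (1 + y) ≤ x + (1 - 2 * x) * y := by
    refine (div_le_self (abs_nonneg _) (by linarith [hy.1])).trans (abs_le.2 ⟨?_, ?_⟩) <;>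
      nlinarith [mul_nonneg hx.1 (sub_nonneg.2 hy.2), mul_nonneg hy.1 (sub_nonneg.2 hx.2)]
  have hchord_integral : ∫ y in (0 : ℝ)..1, (x + (1 - 2 * x) * y) = 1 / 2 := by
    rw [intervalIntegral.integral_add (by simp)
      (Continuous.intervalIntegrable (by fun_prop) _ _), intervalIntegral.integral_const_mul,
      integral_id, intervalIntegral.integral_const, smul_eq_mul]
    ring
  have hint : IntervalIntegrable (fun y => |x - y| / (1 + y)) volume 0 1 := by
    refine ContinuousOn.intervalIntegrable_of_Icc zero_le_one ?_
    exact ContinuousOn.div (by fun_prop) (by fun_prop) fun y hy => by linarith [hy.1]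
  rw [integral_gaussMeasure, one_div, mul_inv_rev, ← one_div 2, ← hchord_integral]
  gcongr
  exact intervalIntegral.integral_mono_on zero_le_one hint
    (Continuous.intervalIntegrable (by fun_prop) _ _) hchord

theorem abs_sub_integral_gaussMeasure_le (hh : LipschitzOnWith K h (Icc 0 1)) {x : ℝ}
    (hx : x ∈ Icc (0 : ℝ) 1) :
    |h x - ∫ y, h y ∂gaussMeasure| ≤ K * (1 / (2 * Real.log 2)) := by
  have hmean : h x - ∫ y, h y ∂gaussMeasure = ∫ y, (h x - h y) ∂gaussMeasure := by
    rw [integral_sub (integrable_const _) (integrable_gaussMeasure hh.continuousOn),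
      integral_const, probReal_univ, one_smul]
  have hdist : Integrable (fun y => |x - y|) gaussMeasure :=
    integrable_gaussMeasure (Continuous.continuousOn (by fun_prop))
  calc |h x - ∫ y, h y ∂gaussMeasure| ≤ ∫ y, K * |x - y| ∂gaussMeasure := by
        rw [hmean, ← Real.norm_eq_abs]
        refine norm_integral_le_of_norm_le (hdist.const_mul _) ?_
        filter_upwards [ae_gaussMeasure_mem_Ioo] with y hy
        exact hh.norm_sub_le hx (Ioo_subset_Icc_self hy)
    _ ≤ K * (1 / (2 * Real.log 2)) := by
        rw [integral_const_mul]
        exact mul_le_mul_of_nonneg_left (integral_abs_sub_gaussMeasure_le hx) K.coe_nonneg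

theorem abs_gaussTransfer_iterate_sub_integral_le (hh : LipschitzOnWith K h (Icc 0 1))
    (hnonneg : ∀ x ∈ Icc (0 : ℝ) 1, 0 ≤ h x) (n : ℕ) {x : ℝ} (hx : x ∈ Icc (0 : ℝ) 1) :
    |gaussTransfer^[n] h x - ∫ y, h y ∂gaussMeasure| ≤
      (11 / 12) ^ n * K * (1 / (2 * Real.log 2)) := by
  have hlip := abs_sub_integral_gaussMeasure_le (lipschitzOnWith_gaussTransfer_iterate hh n) hx
  rw [integral_gaussTransfer_iterate hh hnonneg n] at hlip
  exact_mod_cast hlip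

end Duality

/-- The family of densities `(1 + x) / ((1 + s x) (1 + u x))` with respect to the Gauss measure. Up
to normalisation, `s, u ∈ [0, 1]` give the laws of the iterates of the Gauss map conditioned on
cylinders. -/
noncomputable def mobiusDensity (s u x : ℝ) : ℝ := (1 + x) / ((1 + s * x) * (1 + u * x))

/-- The unnormalised measure with density `mobiusDensity s u` with respect to the Gauss measure. -/
noncomputable def mobiusMeasure (s u : ℝ) : Measure ℝ :=
  gaussMeasure.withDensity fun x => ENNReal.ofReal (mobiusDensity s u x)

section MobiusMeasure

variable {s u : ℝ}

theorem mobiusDensity_nonneg (hs : 0 ≤ s) (hu : 0 ≤ u) : ∀ x ∈ Icc (0 : ℝ) 1,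
    0 ≤ mobiusDensity s u x := by
  intro x hx
  have hx0 := hx.1
  unfold mobiusDensity
  positivity

theorem measurable_mobiusDensity (s u : ℝ) : Measurable (mobiusDensity s u) := by
  unfold mobiusDensity
  fun_prop

theorem lipschitzOnWith_mobiusDensity (hs : s ∈ Icc (0 : ℝ) 1) (hu : u ∈ Icc (0 : ℝ) 1) :
    LipschitzOnWith 1 (mobiusDensity s u) (Icc 0 1) := by
  refine LipschitzOnWith.of_dist_le_mul fun x ⟨hx, _⟩ y ⟨hy, _⟩ => ?_
  obtain ⟨hs0, hs1⟩ := hs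
  obtain ⟨hu0, hu1⟩ := hu
  have hsx : 1 ≤ 1 + s * x := le_add_of_nonneg_right (mul_nonneg hs0 hx)
  have hsy : 1 ≤ 1 + s * y := le_add_of_nonneg_right (mul_nonneg hs0 hy)
  have hux : 1 ≤ 1 + u * x := le_add_of_nonneg_right (mul_nonneg hu0 hx)
  set a := (1 - s) / ((1 + s * x) * (1 + s * y) * (1 + u * x)) with ha
  set b := u * (1 + y) / ((1 + s * y) * (1 + u * x) * (1 + u * y)) with hb
  have hfactor : mobiusDensity s u x - mobiusDensity s u y = (a - b) * (x - y) := by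
    rw [ha, hb]
    unfold mobiusDensity
    field_simp
    ring
  have ha0 : 0 ≤ a := div_nonneg (sub_nonneg.2 hs1) (by positivity)
  have ha1 : a ≤ 1 := div_le_one_of_le₀
    ((sub_le_self 1 hs0).trans (one_le_mul_of_one_le_of_one_le
      (one_le_mul_of_one_le_of_one_le hsx hsy) hux)) (by positivity)
  have hb0 : 0 ≤ b := by positivity
  have hb1 : b ≤ 1 := by
    refine div_le_one_of_le₀ ?_ (by positivity)
    calc u * (1 + y) ≤ 1 + u * y := by linarith
      _ ≤ (1 + s * y) * (1 + u * x) * (1 + u * y) :=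
        le_mul_of_one_le_left (by positivity) (one_le_mul_of_one_le_of_one_le hsy hux)
  rw [Real.dist_eq, Real.dist_eq, hfactor, abs_mul, NNReal.coe_one]
  gcongr
  exact abs_sub_le_of_nonneg_of_le ha0 ha1 hb0 hb1

theorem integral_one_div_one_add_gaussMeasure :
    ∫ x, 1 / (1 + x) ∂gaussMeasure = 1 / (2 * Real.log 2) := by
  have hint : ∫ x in (0 : ℝ)..1, 1 / (1 + x) / (1 + x) = 1 / 2 := by
    have hderiv (x : ℝ) (hx : x ∈ uIcc (0 : ℝ) 1) :
        HasDerivAt (fun x => x / (1 + x)) (1 / (1 + x) / (1 + x)) x := by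
      rw [uIcc_of_le zero_le_one] at hx
      have hne : 1 + x ≠ 0 := by linarith [hx.1]
      refine ((hasDerivAt_id x).fun_div ((hasDerivAt_id x).const_add 1) hne).congr_deriv ?_
      simp only [id]
      field_simp
      ring
    rw [intervalIntegral.integral_eq_sub_of_hasDerivAt hderiv]
    · norm_num
    · refine ContinuousOn.intervalIntegrable fun x hx => ContinuousAt.continuousWithinAt ?_
      rw [uIcc_of_le zero_le_one] at hx
      have hne : 1 + x ≠ 0 := by linarith [hx.1]
      fun_prop (disch := exact hne)
  rw [integral_gaussMeasure, hint, mul_comm, ← div_eq_mul_inv, div_div]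

theorem le_integral_mobiusDensity (hs : s ∈ Icc (0 : ℝ) 1) (hu : u ∈ Icc (0 : ℝ) 1) :
    1 / (2 * Real.log 2) ≤ ∫ x, mobiusDensity s u x ∂gaussMeasure := by
  rw [← integral_one_div_one_add_gaussMeasure]
  refine integral_mono_ae (integrable_gaussMeasure ?_)
    (integrable_gaussMeasure (lipschitzOnWith_mobiusDensity hs hu).continuousOn) ?_
  · exact ContinuousOn.div (by fun_prop) (by fun_prop) fun x hx => by linarith [hx.1]
  filter_upwards [ae_gaussMeasure_mem_Ioo] with x ⟨hx0, _⟩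
  have hs0 := hs.1
  have hu0 := hu.1
  simp only [mobiusDensity]
  rw [div_le_div_iff₀ (by positivity) (by positivity), one_mul]
  gcongr
  · exact mul_le_of_le_one_left hx0.le hs.2
  · exact mul_le_of_le_one_left hx0.le hu.2

theorem mobiusMeasure_univ (hs : s ∈ Icc (0 : ℝ) 1) (hu : u ∈ Icc (0 : ℝ) 1) :
    mobiusMeasure s u univ = ENNReal.ofReal (∫ x, mobiusDensity s u x ∂gaussMeasure) := by
  rw [mobiusMeasure, withDensity_apply _ MeasurableSet.univ, setLIntegral_univ,
    lintegral_ofReal_gaussMeasure (lipschitzOnWith_mobiusDensity hs hu).continuousOn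
      (mobiusDensity_nonneg hs.1 hu.1)]

theorem mobiusMeasure_zero_one : mobiusMeasure 0 1 = gaussMeasure := by
  have hone : (fun x => ENNReal.ofReal (mobiusDensity 0 1 x)) =ᵐ[gaussMeasure] 1 := by
    filter_upwards [ae_gaussMeasure_mem_Ioo] with x ⟨hx, _⟩
    have hne : 1 + x ≠ 0 := by positivity
    simp [mobiusDensity, hne]
  rw [mobiusMeasure, withDensity_congr_ae hone, withDensity_one]

theorem gaussWeight_mul_mobiusDensity_gaussBranch (i : ℕ) {y : ℝ} (hs : 0 ≤ s) (hu : 0 ≤ u)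
    (hy : 0 ≤ y) : gaussWeight i y * mobiusDensity s u (gaussBranch i y) =
      gaussBranch i s * gaussBranch i u *
        mobiusDensity (gaussBranch i s) (gaussBranch i u) y := by
  unfold gaussWeight mobiusDensity gaussBranch
  push_cast
  field_simp
  ring

theorem mobiusMeasure_eq_tsum_gaussBranch (hs : 0 ≤ s) (hu : 0 ≤ u) {E : Set ℝ}
    (hE : MeasurableSet E) :
    mobiusMeasure s u E = ∑' i, ENNReal.ofReal (gaussBranch i s * gaussBranch i u) *
      mobiusMeasure (gaussBranch i s) (gaussBranch i u) (gaussBranch i ⁻¹' E) := by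
  rw [mobiusMeasure, withDensity_apply _ hE, setLIntegral_gaussMeasure_eq_tsum_gaussBranch _ hE]
  refine tsum_congr fun i => ?_
  rw [mobiusMeasure, withDensity_apply _ (measurable_gaussBranch i hE),
    ← lintegral_const_mul _ (measurable_mobiusDensity _ _).ennreal_ofReal]
  refine lintegral_congr_ae (ae_restrict_of_ae ?_)
  filter_upwards [ae_gaussMeasure_mem_Ioo] with y ⟨hy, _⟩
  have hs' := gaussBranch_pos (i := i) hs
  have hu' := gaussBranch_pos (i := i) hu
  rw [← ENNReal.ofReal_mul (gaussWeight_nonneg hy.le), ← ENNReal.ofReal_mul (by positivity),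
    gaussWeight_mul_mobiusDensity_gaussBranch i hs hu hy.le]

theorem gaussTransfer_iterate_mobiusDensity_mem_Icc (hs : s ∈ Icc (0 : ℝ) 1)
    (hu : u ∈ Icc (0 : ℝ) 1) (n : ℕ) {y : ℝ} (hy : y ∈ Icc (0 : ℝ) 1) :
    gaussTransfer^[n] (mobiusDensity s u) y ∈
      Icc ((1 - (11 / 12) ^ n) * ∫ x, mobiusDensity s u x ∂gaussMeasure)
        ((1 + (11 / 12) ^ n) * ∫ x, mobiusDensity s u x ∂gaussMeasure) := by
  have hdist := abs_gaussTransfer_iterate_sub_integral_le (lipschitzOnWith_mobiusDensity hs hu)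
    (mobiusDensity_nonneg hs.1 hu.1) n hy
  rw [NNReal.coe_one, mul_one] at hdist
  have hrel := abs_le.1 <| hdist.trans <|
    mul_le_mul_of_nonneg_left (le_integral_mobiusDensity hs hu) (by positivity)
  constructor <;> linarith [hrel.1, hrel.2]

theorem mobiusMeasure_preimage_gaussMap_iterate_mem_Icc (hs : s ∈ Icc (0 : ℝ) 1)
    (hu : u ∈ Icc (0 : ℝ) 1) (n : ℕ) {B : Set ℝ} (hB : MeasurableSet B) :
    mobiusMeasure s u (gaussMap^[n] ⁻¹' B) ∈
      Icc (ENNReal.ofReal (1 - (11 / 12) ^ n) * mobiusMeasure s u univ * gaussMeasure B)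
        (ENNReal.ofReal (1 + (11 / 12) ^ n) * mobiusMeasure s u univ * gaussMeasure B) := by
  have hbounds : ∀ᵐ y ∂gaussMeasure.restrict B,
      gaussTransfer^[n] (mobiusDensity s u) y ∈ _ :=
    ae_restrict_of_ae <| ae_gaussMeasure_mem_Ioo.mono fun y hy =>
      gaussTransfer_iterate_mobiusDensity_mem_Icc hs hu n (Ioo_subset_Icc_self hy)
  have hlow : (0 : ℝ) ≤ 1 - (11 / 12) ^ n :=
    sub_nonneg.2 (pow_le_one₀ (by norm_num) (by norm_num))
  rw [mobiusMeasure_univ hs hu, ← ENNReal.ofReal_mul hlow, ← ENNReal.ofReal_mul (by positivity),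
    mobiusMeasure, withDensity_apply _ (measurable_gaussMap.iterate n hB),
    setLIntegral_preimage_gaussMap_iterate (lipschitzOnWith_mobiusDensity hs hu)
      (mobiusDensity_nonneg hs.1 hu.1) n hB, ← setLIntegral_const, ← setLIntegral_const]
  exact ⟨lintegral_mono_ae (hbounds.mono fun _ hy => ENNReal.ofReal_le_ofReal hy.1),
    lintegral_mono_ae (hbounds.mono fun _ hy => ENNReal.ofReal_le_ofReal hy.2)⟩

end MobiusMeasure

theorem cfa_add (m n : ℕ) (x : ℝ) : cfa (m + n) x = cfa m (gaussMap^[n] x) := by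
  induction n generalizing x with
  | zero => rfl
  | succ _ ih => exact ih (gaussMap x)

theorem measurable_cfa (n : ℕ) : Measurable (cfa n) := by
  induction n with
  | zero => exact Nat.measurable_floor.comp measurable_inv
  | succ n ih => exact ih.comp measurable_gaussMap

/-- The vector `(a_1, …, a_k)` of the first `k` partial quotients; its fibres are the cylinders of
rank `k`. -/
noncomputable def cfPrefix (k : ℕ) (x : ℝ) (i : Fin k) : ℕ := cfa i x

section Mixing

variable {A B : Set ℝ}

theorem measurable_cfPrefix (k : ℕ) : Measurable (cfPrefix k) :=
  measurable_pi_iff.2 fun i => measurable_cfa i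

theorem cfPrefix_gaussBranch (k i : ℕ) {y : ℝ} (hy : y ∈ Ico (0 : ℝ) 1) :
    cfPrefix (k + 1) (gaussBranch i y) = Fin.cons (i + 1) (cfPrefix k y) := by
  ext j
  cases j using Fin.cases with
  | zero => exact cfa_zero_gaussBranch hy
  | succ j => exact cfa_succ_gaussBranch j hy

theorem exists_cfPrefix_preimage_eq {k : ℕ} (hA : MeasurableSet[cfSigmaUpTo k] A) :
    ∃ S, cfPrefix k ⁻¹' S = A := by
  have hle : cfSigmaUpTo k ≤ MeasurableSpace.comap (cfPrefix k) ⊤ := iSup₂_le fun i hi => by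
    rintro _ ⟨S, -, rfl⟩
    exact ⟨{w | w ⟨i, Finset.mem_range.1 hi⟩ ∈ S}, trivial, rfl⟩
  obtain ⟨S, -, hS⟩ := hle A hA
  exact ⟨S, hS⟩

theorem exists_gaussMap_iterate_preimage_eq {j : ℕ} (hB : MeasurableSet[cfSigmaFrom j] B) :
    ∃ C, MeasurableSet C ∧ gaussMap^[j] ⁻¹' C = B := by
  have hle : cfSigmaFrom j ≤ MeasurableSpace.comap gaussMap^[j] inferInstance :=
    iSup₂_le fun i hi => by
      rintro _ ⟨S, -, rfl⟩
      refine ⟨cfa (i - j) ⁻¹' S, measurable_cfa _ trivial, ?_⟩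
      ext x
      rw [mem_preimage, mem_preimage, ← cfa_add, Nat.sub_add_cancel hi, mem_preimage]
  exact hle B hB

theorem gaussBranch_preimage_cfPrefix_ae_eq (k i : ℕ) (S : Set (Fin (k + 1) → ℕ)) :
    gaussBranch i ⁻¹' (cfPrefix (k + 1) ⁻¹' S) =ᵐ[gaussMeasure]
      cfPrefix k ⁻¹' (Fin.cons (α := fun _ => ℕ) (i + 1) ⁻¹' S) := by
  filter_upwards [ae_gaussMeasure_mem_Ioo] with y hy
  exact congrArg S (cfPrefix_gaussBranch k i (Ioo_subset_Ico_self hy))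

theorem mobiusMeasure_cfPrefix_inter_mem_Icc (n : ℕ) {s u : ℝ} (hs : s ∈ Icc (0 : ℝ) 1)
    (hu : u ∈ Icc (0 : ℝ) 1) (k : ℕ) (S : Set (Fin k → ℕ)) (hB : MeasurableSet B) :
    mobiusMeasure s u (cfPrefix k ⁻¹' S ∩ gaussMap^[n + k] ⁻¹' B) ∈
      Icc (ENNReal.ofReal (1 - (11 / 12) ^ n) * mobiusMeasure s u (cfPrefix k ⁻¹' S) *
          gaussMeasure B)
        (ENNReal.ofReal (1 + (11 / 12) ^ n) * mobiusMeasure s u (cfPrefix k ⁻¹' S) *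
          gaussMeasure B) := by
  induction k generalizing s u with
  | zero =>
    obtain rfl | hne := S.eq_empty_or_nonempty
    · simp
    · obtain rfl := Subsingleton.eq_univ_of_nonempty hne
      simpa using mobiusMeasure_preimage_gaussMap_iterate_mem_Icc hs hu n hB
  | succ k ih =>
    rw [← add_assoc, Function.iterate_succ, preimage_comp]
    have hprefix (i : ℕ) := gaussBranch_preimage_cfPrefix_ae_eq k i S
    have hbranch (i : ℕ) : gaussBranch i ⁻¹'
        (cfPrefix (k + 1) ⁻¹' S ∩ gaussMap ⁻¹' (gaussMap^[n + k] ⁻¹' B)) =ᵐ[gaussMeasure]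
          (cfPrefix k ⁻¹' (Fin.cons (α := fun _ => ℕ) (i + 1) ⁻¹' S) ∩
            gaussMap^[n + k] ⁻¹' B : Set ℝ) := by
      rw [preimage_inter]
      exact ae_eq_set_inter (hprefix i) (gaussBranch_preimage_gaussMap_preimage_ae_eq i _)
    have hac (s u : ℝ) : mobiusMeasure s u ≪ gaussMeasure := withDensity_absolutelyContinuous _ _
    have hmeasS := measurable_cfPrefix (k + 1) S.to_countable.measurableSet
    have hmeas := hmeasS.inter <| measurable_gaussMap <| measurable_gaussMap.iterate (n + k) hB
    rw [mobiusMeasure_eq_tsum_gaussBranch hs.1 hu.1 hmeas,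
      mobiusMeasure_eq_tsum_gaussBranch hs.1 hu.1 hmeasS]
    simp only [measure_congr ((hac _ _).ae_eq (hbranch _)),
      measure_congr ((hac _ _).ae_eq (hprefix _)), ← ENNReal.tsum_mul_left,
      ← ENNReal.tsum_mul_right]
    have hmem (i : ℕ) := ih (gaussBranch_mem_Icc (i := i) hs.1) (gaussBranch_mem_Icc (i := i) hu.1)
      (Fin.cons (α := fun _ => ℕ) (i + 1) ⁻¹' S)
    constructor <;> refine ENNReal.tsum_le_tsum fun i => ?_
    · rw [mul_left_comm, mul_assoc _ _ (gaussMeasure B)]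
      exact mul_le_mul_right (hmem i).1 _
    · rw [mul_left_comm, mul_assoc _ _ (gaussMeasure B)]
      exact mul_le_mul_right (hmem i).2 _

end Mixing

/-- **Philipp's ψ-mixing estimate**: there exists `θ ∈ (0,1)` such that
`|μ(A ∩ B) − μ(A)μ(B)| ≤ θ^n μ(A)μ(B)` for all `k, n ≥ 1`, all `A ∈ σ(a_1, …, a_k)` and all
`B ∈ σ(a_{k+n+1}, …)`, where `μ` is the Gauss measure. -/
theorem philipp_mixing :
    ∃ θ : ℝ, θ ∈ Set.Ioo (0 : ℝ) 1 ∧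
      ∀ k n : ℕ, 1 ≤ k → 1 ≤ n → ∀ A B : Set ℝ,
        MeasurableSet[cfSigmaUpTo k] A → MeasurableSet[cfSigmaFrom (k + n)] B →
        |(gaussMeasure (A ∩ B)).toReal - (gaussMeasure A).toReal * (gaussMeasure B).toReal| ≤
          θ ^ n * (gaussMeasure A).toReal * (gaussMeasure B).toReal := by
  refine ⟨11 / 12, by norm_num, fun k n _ _ A B hA hB => ?_⟩
  obtain ⟨S, rfl⟩ := exists_cfPrefix_preimage_eq hA
  obtain ⟨C, hC, rfl⟩ := exists_gaussMap_iterate_preimage_eq hB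
  obtain ⟨hlower, hupper⟩ :=
    mobiusMeasure_cfPrefix_inter_mem_Icc n unitInterval.zero_mem unitInterval.one_mem k S hC
  have hC_eq : gaussMeasure (gaussMap^[k + n] ⁻¹' C) = gaussMeasure C :=
    (measurePreserving_gaussMap.iterate (k + n)).measure_preimage hC.nullMeasurableSet
  rw [mobiusMeasure_zero_one, add_comm n k] at hlower hupper
  have hlow : (0 : ℝ) ≤ 1 - (11 / 12) ^ n :=
    sub_nonneg.2 (pow_le_one₀ (by norm_num) (by norm_num))
  have hlower' := ENNReal.toReal_mono (by finiteness) hlower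
  have hupper' := ENNReal.toReal_mono (by finiteness) hupper
  rw [ENNReal.toReal_mul, ENNReal.toReal_mul, ENNReal.toReal_ofReal hlow] at hlower'
  rw [ENNReal.toReal_mul, ENNReal.toReal_mul, ENNReal.toReal_ofReal (by positivity)] at hupper'
  rw [hC_eq, abs_le]
  constructor <;> linarith
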